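/- Among all n-vertex bicyclic graphs with exactly two cycles (n ≥ 5), the graph S_n^{3,3} — two triangles sharing a vertex w with n - 5 pendent edges at w — attains the minimum degree resistance distance, and D_R(S_n^{3,3}) = 3n^2 - (13/3)n - 32/3. -/

import Mathlib

/-!
The lower bound rests on Thomson's principle: a resistance is the minimal energy of a unit flow.
A connected graph with `n` vertices and `n + 1` edges having exactly two cycles has edge-disjoint
cycles, of lengths `k₁` and `k₂` (`exists_two_cycles`), and all its other edges, `n + 1 - k₁ - k₂`
in number, are bridges. The flow through a bridge is determined by which sides of it the two
terminals lie on (`sepBy_le_sq`). For each cycle there is a retraction `p` of the graph onto it,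
and the flow on the cycle is determined, up to a constant circulation, by the labels `p a` and
`p b` of the terminals; so its energy is at least the resistance `cycRes k (p a) (p b)` of the cycle
between these labels (`IsRetraction.cycRes_le`). Hence the resistance is at least the sum of these
contributions, and so is the degree resistance distance, contribution by contribution:

* each bridge contributes at least `3 n` (`le_sum_vdeg_mul_sepBy`);
* each cycle of length `k` contributes at least `(k² - 1) (2 n - k + 1) / 3`
  (`IsRetraction.le_sum_vdeg_mul_cycRes`).

Both bounds follow from counting degrees: a connected piece on `s` vertices has at least `s - 1`
internal edges. An elementary inequality (`cycle_share_bound`) shows that the total is smallest for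
`k₁ = k₂ = 3`, where it equals `3 n² - 13 n / 3 - 32 / 3`.

For `S33 n` the resistances are computed exactly, from the inverse of the grounded Laplacian: by
Ohm's law a potential whose gradient is a unit flow has the resistance as its potential difference
(`eRes_eq_of_potential`), and the double sum then has the value above (`DR_S33`).
-/

open Finset

/-- The effective resistance between `a` and `b` in the electrical network obtained
from `G` by replacing each edge with a unit resistor, defined via Thomson's
principle as the minimal energy of a unit flow from `a` to `b`. -/
noncomputable def eRes {V : Type*} [Fintype V] (G : SimpleGraph V) (a b : V) : ℝ :=
  sInf { E : ℝ | ∃ f : V → V → ℝ,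
    (∀ u v, f u v = - f v u) ∧
    (∀ u v, ¬ G.Adj u v → f u v = 0) ∧
    (∀ v, v ≠ a → v ≠ b → ∑ u, f v u = 0) ∧
    (∑ u, f a u = 1) ∧
    E = (1/2) * ∑ u, ∑ v, (f u v)^2 }

/-- The degree of a vertex. -/
noncomputable def vdeg {V : Type*} (G : SimpleGraph V) (v : V) : ℕ :=
  Nat.card (G.neighborSet v)

/-- `Kf_v(G)`, the sum of resistance distances from `v` to all vertices. -/
noncomputable def KfAt {V : Type*} [Fintype V] (G : SimpleGraph V) (v : V) : ℝ :=
  ∑ u : V, eRes G u v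

/-- The Kirchhoff index `Kf(G) = Σ_{{u,v}} r(u,v)`. -/
noncomputable def Kf {V : Type*} [Fintype V] (G : SimpleGraph V) : ℝ :=
  (1/2) * ∑ v : V, ∑ u : V, eRes G u v

/-- `D_v(G) = Σ_u d(u) r(u,v)`. -/
noncomputable def DAt {V : Type*} [Fintype V] (G : SimpleGraph V) (v : V) : ℝ :=
  ∑ u : V, (vdeg G u : ℝ) * eRes G u v

/-- The degree resistance distance `D_R(G) = Σ_{{u,v}} (d(u)+d(v)) r(u,v)`. -/
noncomputable def DR {V : Type*} [Fintype V] (G : SimpleGraph V) : ℝ :=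
  (1/2) * ∑ v : V, ∑ u : V, ((vdeg G u : ℝ) + (vdeg G v : ℝ)) * eRes G u v


/-- `s` is the vertex set of a cycle of `G`. -/
def IsCycleSet {V : Type*} [DecidableEq V] (G : SimpleGraph V) (s : Set V) : Prop :=
  ∃ (v : V) (w : G.Walk v v), w.IsCycle ∧ (↑w.support.toFinset : Set V) = s

/-- `S_n^{3,3}`: two triangles `{0,1,2}` and `{0,3,4}` sharing the vertex `0`,
with `n - 5` pendent edges attached at `0`. -/
def S33 (n : ℕ) : SimpleGraph (Fin n) :=
  SimpleGraph.fromRel (fun a b =>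
    a.val = 0 ∨ (a.val = 1 ∧ b.val = 2) ∨ (a.val = 3 ∧ b.val = 4))

/-! ### The two edge-disjoint cycles -/

section structural

variable {V : Type*}

/-- A cycle with a chord has three cycle sets: its own, and those of the two cycles formed by the
chord and one of the two arcs between its ends. -/
lemma exists_three_cycleSets [DecidableEq V] {G : SimpleGraph V} {v : V} (c : G.Walk v v)
    (hc : c.IsCycle) {x y : V} (hx : x ∈ c.support) (hy : y ∈ c.support) (hxy : G.Adj x y)
    (he : s(x, y) ∉ c.edges) :
    ∃ P Q R : Set V, IsCycleSet G P ∧ IsCycleSet G Q ∧ IsCycleSet G R ∧ P ≠ Q ∧ P ≠ R ∧ Q ≠ R := by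
  set d := c.rotate x hx with hd
  have hdc : d.IsCycle := hc.rotate hx
  have hyd : y ∈ d.support := (c.mem_support_rotate_iff x hx).2 hy
  have hed : s(x, y) ∉ d.edges := fun h => he ((c.rotate_edges x hx).mem_iff.1 h)
  have hspec := d.take_spec hyd
  set p := d.takeUntil y hyd with hp
  set q := d.dropUntil y hyd with hq
  have hpe : s(x, y) ∉ p.edges := fun h => hed (d.edges_takeUntil_subset_edges hyd h)
  have hqe : s(x, y) ∉ q.edges := fun h => hed (d.edges_dropUntil_subset_edges hyd h)
  have hpp : p.IsPath := hdc.isPath_takeUntil hyd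
  have hpn : ¬ p.Nil := fun h => hxy.ne h.eq
  have hqn : ¬ q.Nil := fun h => hxy.ne h.eq.symm
  have hqp : q.IsPath := by
    have : (p.append q).IsCycle := by rw [hspec]; exact hdc
    exact this.isPath_of_append_right hpn
  have hnd : (p.support.tail ++ q.support.tail).Nodup := by
    have := hdc.support_nodup
    rwa [← hspec, SimpleGraph.Walk.tail_support_append] at this
  have hmeet : ∀ w, w ∈ p.support → w ∈ q.support → w = x ∨ w = y := by
    intro w h1 h2
    rw [p.mem_support_iff] at h1
    rw [q.mem_support_iff] at h2
    rcases h1 with h1 | h1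
    · exact Or.inl h1
    rcases h2 with h2 | h2
    · exact Or.inr h2
    exact absurd h2 (List.disjoint_of_nodup_append hnd h1)
  have key : ∀ (a b : V) (r : G.Walk a b), G.Adj b a → r.IsPath → s(b, a) ∉ r.edges → ¬ r.Nil →
      IsCycleSet G {w | w ∈ r.support} ∧ ∃ z ∈ r.support, z ≠ a ∧ z ≠ b := by
    intro a b r hab hr her hn
    refine ⟨⟨b, SimpleGraph.Walk.cons hab r, (r.cons_isCycle_iff hab).2 ⟨hr, her⟩, ?_⟩,
      r.snd, r.getVert_mem_support 1, (r.adj_snd hn).ne', ?_⟩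
    · ext w
      simp only [SimpleGraph.Walk.support_cons, List.coe_toFinset, Set.mem_ofPred_eq,
        List.mem_cons]
      exact ⟨fun h => h.elim (fun h => h ▸ r.end_mem_support) id, Or.inr⟩
    · intro h
      apply her
      have h1 := r.mk_start_snd_mem_edges hn
      rw [h] at h1
      rwa [Sym2.eq_swap]
  obtain ⟨hP, z, hz, hz1, hz2⟩ := key x y p hxy.symm hpp (by rwa [Sym2.eq_swap]) hpn
  obtain ⟨hQ, t, ht, ht1, ht2⟩ := key y x q hxy hqp hqe hqn
  have hzq : z ∉ q.support := fun h => (hmeet z hz h).elim hz1 hz2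
  have htp : t ∉ p.support := fun h => (hmeet t h ht).elim ht2 ht1
  refine ⟨_, _, _, hP, hQ, ⟨x, d, hdc, rfl⟩, ?_, ?_, ?_⟩
  · intro h
    exact hzq ((Set.ext_iff.1 h z).1 hz)
  · intro h
    exact htp ((Set.ext_iff.1 h t).2 (by
      simpa using d.support_dropUntil_subset_support hyd ht))
  · intro h
    exact hzq ((Set.ext_iff.1 h z).2 (by
      simpa using d.support_takeUntil_subset_support hyd hz))

/-- If a connected graph with `|V| + 1` edges has exactly two cycle sets, these are carried by two
edge-disjoint cycles, and every cycle of the graph has the edge set of one of the two. -/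
lemma exists_two_cycles {n : ℕ} {G : SimpleGraph (Fin n)} (hconn : G.Connected)
    (hcard : Nat.card G.edgeSet = n + 1) (h2 : {s : Set (Fin n) | IsCycleSet G s}.ncard = 2) :
    ∃ (v₁ v₂ : Fin n) (c₁ : G.Walk v₁ v₁) (c₂ : G.Walk v₂ v₂), c₁.IsCycle ∧ c₂.IsCycle ∧
      (∀ e ∈ c₁.edges, e ∉ c₂.edges) ∧
      ∀ (v : Fin n) (c : G.Walk v v), c.IsCycle →
        (∀ e, e ∈ c.edges ↔ e ∈ c₁.edges) ∨ (∀ e, e ∈ c.edges ↔ e ∈ c₂.edges) := by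
  obtain ⟨A, B, hAB, hset⟩ := Set.ncard_eq_two.1 h2
  have hS : ∀ s, IsCycleSet G s ↔ s = A ∨ s = B := by
    intro s
    have := Set.ext_iff.1 hset s
    simpa using this
  obtain ⟨v₁, c₁, hc₁, hA⟩ := (hS A).2 (Or.inl rfl)
  obtain ⟨v₂, c₂, hc₂, hB⟩ := (hS B).2 (Or.inr rfl)
  have chord : ∀ (v : Fin n) (c : G.Walk v v), c.IsCycle → ∀ x y, x ∈ c.support → y ∈ c.support →
      G.Adj x y → s(x, y) ∈ c.edges := by
    intro v c hc x y hx hy hxy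
    by_contra he
    obtain ⟨P, Q, R, hP, hQ, hR, h1, h2, h3⟩ := exists_three_cycleSets c hc hx hy hxy he
    rw [hS] at hP hQ hR
    grind
  have sub : ∀ (v w : Fin n) (c : G.Walk v v) (d : G.Walk w w), c.IsCycle → d.IsCycle →
      (↑c.support.toFinset : Set (Fin n)) = ↑d.support.toFinset →
      ∀ e, e ∈ c.edges → e ∈ d.edges := by
    intro v w c d hc hd hcd e he
    have hmem : ∀ x, x ∈ c.support → x ∈ d.support := by
      intro x hx
      have := (Set.ext_iff.1 hcd x).1 (by simpa using hx)
      simpa using this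
    induction e with
    | _ x y =>
      exact chord w d hd x y (hmem x (c.fst_mem_support_of_mem_edges he))
        (hmem y (c.snd_mem_support_of_mem_edges he)) (c.adj_of_mem_edges he)
  have all : ∀ (v : Fin n) (c : G.Walk v v), c.IsCycle →
        (∀ e, e ∈ c.edges ↔ e ∈ c₁.edges) ∨ (∀ e, e ∈ c.edges ↔ e ∈ c₂.edges) := by
    intro v c hc
    rcases (hS _).1 ⟨v, c, hc, rfl⟩ with h | h
    · left
      intro e
      exact ⟨sub _ _ c c₁ hc hc₁ (h.trans hA.symm) e, sub _ _ c₁ c hc₁ hc (hA.trans h.symm) e⟩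
    · right
      intro e
      exact ⟨sub _ _ c c₂ hc hc₂ (h.trans hB.symm) e, sub _ _ c₂ c hc₂ hc (hB.trans h.symm) e⟩
  refine ⟨v₁, v₂, c₁, c₂, hc₁, hc₂, ?_, all⟩
  -- A common edge `g` could be deleted without disconnecting `G`; what remains still has one edge
  -- too many to be a tree, so it has a cycle, which must pass through `g`.
  intro g hg₁ hg₂
  have hgG : g ∈ G.edgeSet := c₁.edges_subset_edgeSet hg₁
  have hconn' : (G.deleteEdges {g}).Connected := by
    have hnb : ¬ G.IsBridge g := by
      rw [SimpleGraph.isBridge_iff_forall_cycle_notMem hgG]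
      push Not
      exact ⟨v₁, c₁, hc₁, hg₁⟩
    induction g with
    | _ x y => exact hconn.connected_delete_edge_of_not_isBridge hnb
  have hnac : ¬ (G.deleteEdges {g}).IsAcyclic := by
    intro hac
    have ht : (G.deleteEdges {g}).IsTree := ⟨hconn', hac⟩
    have h1 := (SimpleGraph.isTree_iff_connected_and_card.1 ht).2
    have h3 : Nat.card (G.deleteEdges {g}).edgeSet + 1 = Nat.card G.edgeSet := by
      rw [SimpleGraph.edgeSet_deleteEdges, Nat.card_coe_set_eq, Nat.card_coe_set_eq]
      exact Set.ncard_sdiff_singleton_add_one hgG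
    rw [Nat.card_fin] at h1
    omega
  rw [SimpleGraph.IsAcyclic] at hnac
  push Not at hnac
  obtain ⟨v, c, hc⟩ := hnac
  have hle : G.deleteEdges {g} ≤ G := G.deleteEdges_le {g}
  have hgc : g ∉ (c.mapLe hle).edges := by
    rw [SimpleGraph.Walk.edges_mapLe_eq_edges]
    intro h
    have := c.edges_subset_edgeSet h
    rw [SimpleGraph.edgeSet_deleteEdges] at this
    exact this.2 rfl
  rcases all v (c.mapLe hle) ((SimpleGraph.Walk.isCycle_mapLe hle).2 hc) with h | h
  · exact hgc ((h g).2 hg₁)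
  · exact hgc ((h g).2 hg₂)

/-! ### Retractions onto a cycle -/

/-- The spanning subgraph of `G` made of the edges inside the fibres of `p`. -/
def fibreGraph (G : SimpleGraph V) (p : V → ℕ) : SimpleGraph V where
  Adj x y := G.Adj x y ∧ p x = p y
  symm := ⟨fun _ _ h => ⟨h.1.symm, h.2.symm⟩⟩
  loopless := ⟨fun _ h => h.1.ne rfl⟩

/-- `p` retracts `G` onto the cycle `c 0, c 1, …, c (k - 1)`: each fibre of `p` is connected and
contains one vertex of the cycle, and the only edges of `G` joining different fibres are the `k`
edges of the cycle. -/
structure IsRetraction (G : SimpleGraph V) (k : ℕ) (c : ℕ → V) (p : V → ℕ) : Prop where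
  three_le : 3 ≤ k
  lt : ∀ v, p v < k
  apply_c : ∀ i < k, p (c i) = i
  adj_succ : ∀ i, i + 1 < k → G.Adj (c i) (c (i + 1))
  adj_last : G.Adj (c (k - 1)) (c 0)
  eq_of_adj : ∀ x y, G.Adj x y → p x < p y →
    (∃ i, i + 1 < k ∧ x = c i ∧ y = c (i + 1)) ∨ (x = c 0 ∧ y = c (k - 1))
  reachable : ∀ v, (fibreGraph G p).Reachable v (c (p v))

/-- Deleting the edges of the cycle leaves every vertex connected to exactly one vertex of the
cycle; otherwise some cycle would use one edge of `c₀` and avoid another. -/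
lemma exists_isRetraction {G : SimpleGraph V} (hconn : G.Connected) {v₀ : V} (c₀ : G.Walk v₀ v₀)
    (hc₀ : c₀.IsCycle)
    (hstar : ∀ (v : V) (d : G.Walk v v), d.IsCycle → ∀ e ∈ c₀.edges, e ∈ d.edges →
      ∀ e' ∈ c₀.edges, e' ∈ d.edges) :
    ∃ p : V → ℕ, IsRetraction G c₀.length c₀.getVert p ∧
      ∀ x y, G.Adj x y → (s(x, y) ∈ c₀.edges ↔ p x ≠ p y) := by
  set k := c₀.length with hk
  set c := c₀.getVert with hc
  have h3 : 3 ≤ k := hc₀.three_le_length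
  have hck : c k = c 0 := by simp [hc, hk]
  have hinj : ∀ i j, i < k → j < k → c i = c j → i = j := by
    intro i j hi hj h
    exact hc₀.getVert_injOn' (by simp only [Set.mem_ofPred_eq]; omega)
      (by simp only [Set.mem_ofPred_eq]; omega) h
  have hmem : ∀ x y, s(x, y) ∈ c₀.edges ↔ ∃ i < k, s(c i, c (i + 1)) = s(x, y) :=
    fun x y => c₀.mk_mem_edges_iff_exists
  have hadj : ∀ i < k, G.Adj (c i) (c (i + 1)) := fun i hi => c₀.adj_getVert_succ hi
  have hedge : ∀ i < k, s(c i, c (i + 1)) ∈ c₀.edges := fun i hi => (hmem _ _).2 ⟨i, hi, rfl⟩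
  have heinj : ∀ i j, i < k → j < k → s(c i, c (i + 1)) = s(c j, c (j + 1)) → i = j := by
    intro i j hi hj h
    have hnd := hc₀.edges_nodup
    have hl : c₀.edges.length = k := c₀.length_edges
    refine (hnd.getElem_inj_iff (hi := by omega) (hj := by omega)).1 ?_
    rw [c₀.getElem_edges, c₀.getElem_edges]
    exact h
  set H := G.deleteEdges {e | e ∈ c₀.edges} with hH
  have hHadj : ∀ x y, H.Adj x y ↔ G.Adj x y ∧ s(x, y) ∉ c₀.edges := by
    intro x y
    simp [hH, SimpleGraph.deleteEdges_adj]
  have hex : ∀ v, ∃ i < k, H.Reachable v (c i) := by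
    intro v
    obtain ⟨w⟩ := hconn.preconnected v (c 0)
    have : ∀ (a b : V) (w : G.Walk a b), b = c 0 → ∃ i < k, H.Reachable a (c i) := by
      intro a b w
      induction w with
      | nil => intro h; subst h; exact ⟨0, by omega, SimpleGraph.Reachable.refl _⟩
      | @cons a b' _ h w ih =>
        intro hb
        by_cases he : s(a, b') ∈ c₀.edges
        · have ha := c₀.fst_mem_support_of_mem_edges he
          obtain ⟨i, hi, hik⟩ := SimpleGraph.Walk.mem_support_iff_exists_getVert.1 ha
          rcases hik.lt_or_eq with h' | h'
          · exact ⟨i, h', by rw [← hi]⟩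
          · exact ⟨0, by omega, by rw [← hck, ← hi, h']⟩
        · obtain ⟨i, hi, hr⟩ := ih hb
          exact ⟨i, hi, ((hHadj a b').2 ⟨h, he⟩).reachable.trans hr⟩
    exact this v _ w rfl
  have huniq : ∀ i j, i < j → j < k → ¬ H.Reachable (c i) (c j) := by
    intro i j hij hjk hr
    -- The edge `g` after `c i` closes a cycle that avoids the edge `g'` after `c j`.
    set g' := s(c j, c (j + 1)) with hg'
    have hle : G.deleteEdges {g'} ≤ G := G.deleteEdges_le _
    have hne : s(c i, c (i + 1)) ≠ g' := fun h => by
      have := heinj i j (by omega) hjk h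
      omega
    have hcyc := (SimpleGraph.adj_and_reachable_delete_edges_iff_exists_cycle
      (G := G.deleteEdges {g'}) (v := c i) (w := c (i + 1))).1 (by
        refine ⟨by simpa [SimpleGraph.deleteEdges_adj] using ⟨hadj i (by omega), hne⟩, ?_⟩
        set K := G.deleteEdges {g'} \ SimpleGraph.fromEdgeSet {s(c i, c (i + 1))} with hK
        have hKadj : ∀ x y, K.Adj x y ↔ G.Adj x y ∧ s(x, y) ≠ g' ∧
            s(x, y) ≠ s(c i, c (i + 1)) := by
          intro x y
          simp only [hK, SimpleGraph.sdiff_adj, SimpleGraph.deleteEdges_adj, Set.mem_singleton_iff,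
            SimpleGraph.fromEdgeSet_adj]
          constructor
          · rintro ⟨⟨h1, h2⟩, h4⟩
            exact ⟨h1, h2, fun h => h4 ⟨h, h1.ne⟩⟩
          · rintro ⟨h1, h2, h4⟩
            exact ⟨⟨h1, h2⟩, fun h => h4 h.1⟩
        have h1 : K.Reachable (c i) (c j) := by
          refine hr.mono ?_
          intro x y h
          rw [hHadj] at h
          refine (hKadj x y).2 ⟨h.1, fun h' => h.2 ?_, fun h' => h.2 ?_⟩
          · rw [h']; exact hedge j hjk
          · rw [h']; exact hedge i (by omega)
        have h2 : ∀ t, i + 1 + t ≤ j → K.Reachable (c (i + 1)) (c (i + 1 + t)) := by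
          intro t
          induction t with
          | zero => intro _; exact SimpleGraph.Reachable.refl _
          | succ t ih =>
            intro ht
            refine (ih (by omega)).trans (SimpleGraph.Adj.reachable ?_)
            refine (hKadj _ _).2 ⟨hadj (i + 1 + t) (by omega), fun h' => ?_, fun h' => ?_⟩
            · have := heinj _ _ (by omega) (by omega) h'
              omega
            · have := heinj _ _ (by omega) (by omega) h'
              omega
        have h4 := h2 (j - (i + 1)) (by omega)
        rw [show i + 1 + (j - (i + 1)) = j by omega] at h4
        exact h1.trans h4.symm)
    obtain ⟨u, d, hd, hgd⟩ := hcyc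
    have h5 := hstar u (d.mapLe hle) ((SimpleGraph.Walk.isCycle_mapLe hle).2 hd)
      _ (hedge i (by omega)) (by rwa [SimpleGraph.Walk.edges_mapLe_eq_edges]) g' (hedge j hjk)
    rw [SimpleGraph.Walk.edges_mapLe_eq_edges] at h5
    have := d.edges_subset_edgeSet h5
    rw [SimpleGraph.edgeSet_deleteEdges] at this
    exact this.2 rfl
  have huniq' : ∀ i j, i < k → j < k → H.Reachable (c i) (c j) → i = j := by
    intro i j hi hj h
    rcases lt_trichotomy i j with h' | h' | h'
    · exact absurd h (huniq i j h' hj)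
    · exact h'
    · exact absurd h.symm (huniq j i h' hi)
  choose p hp hpr using hex
  have hpc : ∀ i < k, p (c i) = i := fun i hi => (huniq' _ _ hi (hp _) (hpr (c i))).symm
  have hHp : ∀ x y, H.Adj x y → p x = p y := fun x y h =>
    huniq' _ _ (hp x) (hp y) ((hpr x).symm.trans (h.reachable.trans (hpr y)))
  have hedges : ∀ x y, G.Adj x y → (s(x, y) ∈ c₀.edges ↔ p x ≠ p y) := by
    intro x y hxy
    constructor
    · intro he
      obtain ⟨i, hi, h⟩ := (hmem x y).1 he
      have hne : p (c i) ≠ p (c (i + 1)) := by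
        rw [hpc i hi]
        rcases Nat.lt_or_ge (i + 1) k with h' | h'
        · rw [hpc _ h']; omega
        · rw [show i + 1 = k by omega, hck, hpc 0 (by omega)]; omega
      rcases Sym2.eq_iff.1 h with ⟨rfl, rfl⟩ | ⟨rfl, rfl⟩
      · exact hne
      · exact hne.symm
    · intro hne
      by_contra he
      exact hne (hHp x y ((hHadj x y).2 ⟨hxy, he⟩))
  refine ⟨p, ⟨h3, hp, hpc, fun i hi => hadj i (by omega), ?_, ?_, ?_⟩, hedges⟩
  · have := hadj (k - 1) (by omega)
    rwa [show k - 1 + 1 = k by omega, hck] at this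
  · intro x y hxy hlt
    obtain ⟨i, hi, h⟩ := (hmem x y).1 ((hedges x y hxy).2 hlt.ne)
    rcases Nat.lt_or_ge (i + 1) k with h' | h'
    · left
      refine ⟨i, h', ?_⟩
      rcases Sym2.eq_iff.1 h with ⟨rfl, rfl⟩ | ⟨rfl, rfl⟩
      · exact ⟨rfl, rfl⟩
      · rw [hpc _ hi, hpc _ h'] at hlt; omega
    · right
      have hik : i = k - 1 := by omega
      rw [show i + 1 = k by omega, hck] at h
      rcases Sym2.eq_iff.1 h with ⟨rfl, rfl⟩ | ⟨rfl, rfl⟩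
      · rw [hpc _ hi, hpc 0 (by omega)] at hlt; omega
      · exact ⟨rfl, by rw [hik]⟩
  · intro v
    exact (hpr v).mono fun x y h => ⟨((hHadj x y).1 h).1, hHp x y h⟩

/-! ### Degree sums of the pieces -/

section degrees

open Classical in
lemma vdeg_eq_card [Fintype V] (G : SimpleGraph V) (v : V) :
    vdeg G v = #{u | G.Adj v u} := by
  rw [vdeg, Nat.card_eq_fintype_card]
  exact Fintype.card_of_subtype _ (by simp)

lemma sum_vdeg [Fintype V] (G : SimpleGraph V) : ∑ v, vdeg G v = 2 * Nat.card G.edgeSet := by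
  classical
  rw [Nat.card_eq_fintype_card, ← SimpleGraph.edgeFinset_card,
    ← SimpleGraph.sum_degrees_eq_twice_card_edges]
  refine Finset.sum_congr rfl fun v _ => ?_
  rw [vdeg, Nat.card_eq_fintype_card, SimpleGraph.card_neighborSet_eq_degree]

/-- A component `S` of a subgraph `H ≤ G` has at least `|S| - 1` edges of `H`; the edges of `G`
from the vertex `r` of `S` to `T`, which are not in `H`, add `|T|` to the degree sum. -/
lemma two_mul_card_add_le_sum_vdeg [Fintype V] {G H : SimpleGraph V} (hle : H ≤ G) (S : Finset V)
    (r : V) (hS : ∀ v, v ∈ S ↔ H.Reachable v r) (T : Finset V)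
    (hT : ∀ t ∈ T, G.Adj r t ∧ ¬ H.Adj r t) :
    2 * #S + #T ≤ ∑ v ∈ S, vdeg G v + 2 := by
  classical
  set C := H.connectedComponentMk r with hC
  have hmem : ∀ v, v ∈ S ↔ v ∈ C := by
    intro v
    rw [hS, ← SimpleGraph.ConnectedComponent.eq]
    rfl
  have hconn := C.connected_toSimpleGraph.card_vert_le_card_edgeSet_add_one
  have hsum := C.toSimpleGraph.sum_degrees_eq_twice_card_edges
  have hcard : Nat.card C = #S := by
    rw [Nat.card_eq_fintype_card]
    exact Fintype.card_of_subtype S hmem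
  have hdeg : ∀ v : C, C.toSimpleGraph.degree v ≤ #{u | H.Adj v u} := by
    intro v
    rw [← SimpleGraph.card_neighborFinset_eq_degree,
      ← Finset.card_image_of_injective _ Subtype.val_injective]
    refine Finset.card_le_card fun u hu => ?_
    obtain ⟨w, hw, rfl⟩ := Finset.mem_image.1 hu
    rw [SimpleGraph.mem_neighborFinset] at hw
    exact Finset.mem_filter.2 ⟨Finset.mem_univ _, hw⟩
  have h1 : ∑ v : C, C.toSimpleGraph.degree v ≤ ∑ v ∈ S, #{u | H.Adj v u} := by
    rw [Finset.sum_subtype S hmem]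
    exact Finset.sum_le_sum fun v _ => hdeg v
  rw [hcard, Nat.card_eq_fintype_card, ← SimpleGraph.edgeFinset_card] at hconn
  have h2 : ∑ v ∈ S, (#{u | H.Adj v u} + if v = r then #T else 0) ≤ ∑ v ∈ S, vdeg G v := by
    refine Finset.sum_le_sum fun v _ => ?_
    rw [vdeg_eq_card]
    split_ifs with hv
    · subst hv
      rw [← Finset.card_union_of_disjoint]
      · refine Finset.card_le_card fun u hu => ?_
        rcases Finset.mem_union.1 hu with hu | hu
        · exact Finset.mem_filter.2 ⟨Finset.mem_univ _, hle (Finset.mem_filter.1 hu).2⟩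
        · exact Finset.mem_filter.2 ⟨Finset.mem_univ _, (hT u hu).1⟩
      · exact Finset.disjoint_left.2 fun u hu hu' => (hT u hu').2 (Finset.mem_filter.1 hu).2
    · exact Finset.card_le_card fun u hu =>
        Finset.mem_filter.2 ⟨Finset.mem_univ _, hle (Finset.mem_filter.1 hu).2⟩
  rw [Finset.sum_add_distrib, Finset.sum_ite_eq' S r,
    if_pos ((hS r).2 (SimpleGraph.Reachable.refl _))] at h2
  omega

lemma fibreGraph_le (G : SimpleGraph V) (p : V → ℕ) : fibreGraph G p ≤ G := fun _ _ h => h.1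

/-- Each fibre of the retraction is connected and is left by two edges of the cycle. -/
lemma IsRetraction.two_mul_card_le [Fintype V] {G : SimpleGraph V} {k : ℕ} {c : ℕ → V} {p : V → ℕ}
    (h : IsRetraction G k c p) {i : ℕ} (hi : i < k) :
    2 * #{v | p v = i} ≤ ∑ v with p v = i, vdeg G v := by
  classical
  have h3 := h.three_le
  have hfib : ∀ a b, (fibreGraph G p).Reachable a b → p a = p b := by
    rintro a b ⟨w⟩
    induction w with
    | nil => rfl
    | cons hab _ ih => exact hab.2.trans ih
  obtain ⟨x, y, hx, hy, hxy, hxi, hyi⟩ : ∃ x y, G.Adj (c i) x ∧ G.Adj (c i) y ∧ p x ≠ p y ∧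
      p x ≠ i ∧ p y ≠ i := by
    rcases Nat.eq_zero_or_pos i with rfl | h0
    · refine ⟨c 1, c (k - 1), h.adj_succ 0 (by omega), h.adj_last.symm, ?_⟩
      rw [h.apply_c 1 (by omega), h.apply_c (k - 1) (by omega)]
      omega
    · have hpred := h.adj_succ (i - 1) (by omega)
      rw [show i - 1 + 1 = i by omega] at hpred
      rcases Nat.lt_or_ge (i + 1) k with h' | h'
      · refine ⟨c (i - 1), c (i + 1), hpred.symm, h.adj_succ i h', ?_⟩
        rw [h.apply_c _ h', h.apply_c (i - 1) (by omega)]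
        omega
      · have hik : i = k - 1 := by omega
        refine ⟨c (i - 1), c 0, hpred.symm, by rw [hik]; exact h.adj_last, ?_⟩
        rw [h.apply_c 0 (by omega), h.apply_c (i - 1) (by omega)]
        omega
  have key := two_mul_card_add_le_sum_vdeg (fibreGraph_le G p) {v | p v = i} (c i) (fun v => by
    rw [Finset.mem_filter]
    constructor
    · rintro ⟨-, rfl⟩
      exact h.reachable v
    · intro hr
      exact ⟨Finset.mem_univ _, (hfib _ _ hr).trans (h.apply_c i hi)⟩) {x, y} (by
    intro t ht
    have hne : p t ≠ i ∧ G.Adj (c i) t := by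
      rcases Finset.mem_insert.1 ht with rfl | ht
      · exact ⟨hxi, hx⟩
      · rw [Finset.mem_singleton] at ht
        subst ht
        exact ⟨hyi, hy⟩
    refine ⟨hne.2, fun hadj => hne.1 ?_⟩
    rw [← hadj.2, h.apply_c i hi])
  rw [Finset.card_pair (fun hxy' => hxy (by rw [hxy']))] at key
  omega

/-- The edges joining different fibres of the retraction, oriented towards the larger label. -/
def cyclePairs [DecidableEq V] (k : ℕ) (c : ℕ → V) : Finset (V × V) :=
  insert (c 0, c (k - 1)) ((Finset.range (k - 1)).image fun i => (c i, c (i + 1)))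

lemma IsRetraction.mem_cyclePairs [DecidableEq V] {G : SimpleGraph V} {k : ℕ} {c : ℕ → V}
    {p : V → ℕ} (h : IsRetraction G k c p) (x y : V) :
    (x, y) ∈ cyclePairs k c ↔ G.Adj x y ∧ p x < p y := by
  have h3 := h.three_le
  simp only [cyclePairs, Finset.mem_insert, Finset.mem_image, Finset.mem_range, Prod.mk.injEq]
  constructor
  · rintro (⟨rfl, rfl⟩ | ⟨i, hi, rfl, rfl⟩)
    · refine ⟨h.adj_last.symm, ?_⟩
      rw [h.apply_c 0 (by omega), h.apply_c _ (by omega)]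
      omega
    · refine ⟨h.adj_succ i (by omega), ?_⟩
      rw [h.apply_c i (by omega), h.apply_c _ (by omega)]
      omega
  · rintro ⟨hxy, hlt⟩
    rcases h.eq_of_adj x y hxy hlt with ⟨i, hi, rfl, rfl⟩ | ⟨rfl, rfl⟩
    · exact Or.inr ⟨i, by omega, rfl, rfl⟩
    · exact Or.inl ⟨rfl, rfl⟩

lemma IsRetraction.sum_cyclePairs [DecidableEq V] {G : SimpleGraph V} {k : ℕ} {c : ℕ → V}
    {p : V → ℕ} (h : IsRetraction G k c p) {M : Type*} [AddCommMonoid M] (F : V × V → M) :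
    ∑ z ∈ cyclePairs k c, F z
      = F (c 0, c (k - 1)) + ∑ i ∈ Finset.range (k - 1), F (c i, c (i + 1)) := by
  have h3 := h.three_le
  have hpi : ∀ i j, i < k → j < k → c i = c j → i = j := by
    intro i j hi hj hij
    rw [← h.apply_c i hi, hij, h.apply_c j hj]
  rw [cyclePairs, Finset.sum_insert, Finset.sum_image]
  · intro i hi j hj hij
    simp only [Finset.coe_range, Set.mem_Iio] at hi hj
    exact hpi i j (by omega) (by omega) (Prod.mk.inj hij).1
  · simp only [Finset.mem_image, Finset.mem_range, Prod.mk.injEq, not_exists, not_and]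
    intro i hi h1 h2
    have := hpi _ _ (by omega) (by omega) h1
    have := hpi _ _ (by omega) (by omega) h2
    omega

lemma IsRetraction.card_cyclePairs [DecidableEq V] {G : SimpleGraph V} {k : ℕ} {c : ℕ → V}
    {p : V → ℕ} (h : IsRetraction G k c p) : #(cyclePairs k c) = k := by
  have h3 := h.three_le
  rw [Finset.card_eq_sum_ones, h.sum_cyclePairs]
  simp
  omega

end degrees

/-! ### Unit flows and Thomson's principle -/

section flows

variable [Fintype V]

/-- `f` is a unit flow from `a` to `b` in `G`. -/
structure IsUnitFlow (G : SimpleGraph V) (a b : V) (f : V → V → ℝ) : Prop where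
  antisymm : ∀ u v, f u v = - f v u
  supp : ∀ u v, ¬ G.Adj u v → f u v = 0
  div : ∀ S : V → ℝ, ∑ v, S v * ∑ u, f v u = S a - S b

lemma sum_sum_eq_zero_of_antisymm {f : V → V → ℝ} (hf : ∀ u v, f u v = - f v u) :
    ∑ v, ∑ u, f v u = 0 := by
  have h : ∑ v, ∑ u, f v u = - ∑ v, ∑ u, f v u := by
    conv_lhs => rw [Finset.sum_comm]
    rw [← Finset.sum_neg_distrib]
    refine Finset.sum_congr rfl fun v _ => ?_
    rw [← Finset.sum_neg_distrib]
    exact Finset.sum_congr rfl fun u _ => hf u v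
  linarith

lemma isUnitFlow_of_conditions {G : SimpleGraph V} {a b : V} (hab : a ≠ b) {f : V → V → ℝ}
    (h1 : ∀ u v, f u v = - f v u) (h2 : ∀ u v, ¬ G.Adj u v → f u v = 0)
    (h3 : ∀ v, v ≠ a → v ≠ b → ∑ u, f v u = 0) (h4 : ∑ u, f a u = 1) : IsUnitFlow G a b f := by
  classical
  have key : ∀ S : V → ℝ, ∑ v, S v * ∑ u, f v u = S a * ∑ u, f a u + S b * ∑ u, f b u := by
    intro S
    rw [← Finset.sum_pair hab (f := fun v => S v * ∑ u, f v u)]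
    symm
    refine Finset.sum_subset (Finset.subset_univ _) fun v _ hv => ?_
    simp only [Finset.mem_insert, Finset.mem_singleton, not_or] at hv
    rw [h3 v hv.1 hv.2, mul_zero]
  have h5 := key fun _ => 1
  simp only [one_mul] at h5
  rw [sum_sum_eq_zero_of_antisymm h1, h4] at h5
  refine ⟨h1, h2, fun S => ?_⟩
  rw [key, h4, show ∑ u, f b u = -1 by linarith]
  ring

lemma IsUnitFlow.conditions {G : SimpleGraph V} {a b : V} (hab : a ≠ b) {f : V → V → ℝ}
    (h : IsUnitFlow G a b f) :
    (∀ v, v ≠ a → v ≠ b → ∑ u, f v u = 0) ∧ ∑ u, f a u = 1 := by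
  classical
  have key : ∀ v, ∑ u, f v u = (if v = a then 1 else 0) - (if v = b then 1 else 0) := by
    intro v
    have := h.div fun w => if v = w then 1 else 0
    simpa [ite_mul] using this
  refine ⟨fun v hva hvb => by rw [key, if_neg hva, if_neg hvb, sub_zero], ?_⟩
  rw [key, if_pos rfl, if_neg hab, sub_zero]

lemma exists_isUnitFlow {G : SimpleGraph V} {a b : V} (h : G.Reachable a b) :
    ∃ f, IsUnitFlow G a b f := by
  classical
  obtain ⟨w⟩ := h
  induction w with
  | nil => exact ⟨fun _ _ => 0, by simp, by simp, by simp⟩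
  | @cons a b c hab _ ih =>
    obtain ⟨f, hf⟩ := ih
    refine ⟨fun u v => f u v + ((if u = a then if v = b then 1 else 0 else 0)
      - (if u = b then if v = a then 1 else 0 else 0)), ?_, ?_, ?_⟩
    · intro u v
      rw [hf.antisymm u v]
      split_ifs <;> first | tauto | ring
    · intro u v huv
      rw [hf.supp u v huv]
      have h1 : ¬ (u = a ∧ v = b) := by rintro ⟨rfl, rfl⟩; exact huv hab
      have h2 : ¬ (u = b ∧ v = a) := by rintro ⟨rfl, rfl⟩; exact huv hab.symm
      split_ifs <;> simp_all
    · intro S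
      have h1 : ∀ x y : V, ∑ v, S v * ∑ u : V, (if v = x then if u = y then (1 : ℝ) else 0 else 0)
          = S x := by
        intro x y
        rw [Finset.sum_eq_single x]
        · simp
        · intro v _ hv; simp [hv]
        · simp
      simp only [Finset.sum_add_distrib, Finset.sum_sub_distrib, mul_add, mul_sub]
      rw [h1, h1, hf.div]
      ring

/-- A lower bound for the energy of all unit flows is a lower bound for the resistance. -/
lemma le_eRes {G : SimpleGraph V} {a b : V} (hab : a ≠ b) (hr : G.Reachable a b) {r : ℝ}
    (h : ∀ f, IsUnitFlow G a b f → r ≤ (1/2) * ∑ u, ∑ v, (f u v)^2) : r ≤ eRes G a b := by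
  refine le_csInf ?_ ?_
  · obtain ⟨f, hf⟩ := exists_isUnitFlow hr
    exact ⟨_, f, hf.antisymm, hf.supp, (hf.conditions hab).1, (hf.conditions hab).2, rfl⟩
  · rintro E ⟨f, h1, h2, h3, h4, rfl⟩
    exact h f (isUnitFlow_of_conditions hab h1 h2 h3 h4)

lemma eRes_le {G : SimpleGraph V} {a b : V} (hab : a ≠ b) {f : V → V → ℝ}
    (hf : IsUnitFlow G a b f) : eRes G a b ≤ (1/2) * ∑ u, ∑ v, (f u v)^2 := by
  refine csInf_le ⟨0, ?_⟩ ⟨f, hf.antisymm, hf.supp, (hf.conditions hab).1, (hf.conditions hab).2,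
    rfl⟩
  rintro E ⟨f, -, -, -, -, rfl⟩
  positivity

/-- A unit flow from a vertex to itself does not exist, so the infimum is that of the empty set. -/
lemma eRes_self (G : SimpleGraph V) (a : V) : eRes G a a = 0 := by
  unfold eRes
  convert Real.sInf_empty
  ext E
  simp only [Set.mem_ofPred_eq, Set.mem_empty_iff_false, iff_false]
  rintro ⟨f, h1, -, h3, h4, -⟩
  have h := sum_sum_eq_zero_of_antisymm h1
  rw [Finset.sum_eq_single a (fun v _ hv => h3 v hv hv) (by simp), h4] at h
  exact one_ne_zero h

/-- The net flow through the cut `S`, all of whose edges of `G` are listed in `P`. -/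
lemma IsUnitFlow.sum_cut [DecidableEq V] {G : SimpleGraph V} {a b : V} {f : V → V → ℝ}
    (hf : IsUnitFlow G a b f) (S : V → Prop) [DecidablePred S] (P : Finset (V × V))
    (hP : ∀ z ∈ P, S z.1 ∧ ¬ S z.2) (hP' : ∀ x y, S x → ¬ S y → G.Adj x y → (x, y) ∈ P) :
    ∑ z ∈ P, f z.1 z.2 = (if S a then 1 else 0) - (if S b then 1 else 0) := by
  have h1 := hf.div fun v => if S v then 1 else 0
  rw [← h1]
  have h2 : ∑ x, ∑ y, (if S x ∧ S y then f x y else 0) = 0 := by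
    apply sum_sum_eq_zero_of_antisymm
    intro u v
    rw [hf.antisymm u v]
    split_ifs <;> first | rfl | tauto | simp
  have h3 : ∑ x, (if S x then (1 : ℝ) else 0) * ∑ y, f x y
      = ∑ x, ∑ y, (if S x ∧ S y then f x y else 0)
        + ∑ x, ∑ y, (if S x ∧ ¬ S y then f x y else 0) := by
    rw [← Finset.sum_add_distrib]
    refine Finset.sum_congr rfl fun x _ => ?_
    rw [← Finset.sum_add_distrib, Finset.mul_sum]
    refine Finset.sum_congr rfl fun y _ => ?_
    by_cases hx : S x <;> by_cases hy : S y <;> simp [hx, hy]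
  rw [h3, h2, zero_add, ← Fintype.sum_prod_type' (f := fun x y => if S x ∧ ¬ S y then f x y else 0)]
  rw [← Finset.sum_subset (Finset.subset_univ P)]
  · exact Finset.sum_congr rfl fun z hz => by rw [if_pos (hP z hz)]
  · rintro ⟨x, y⟩ _ hz
    dsimp only
    split_ifs with h
    · exact hf.supp x y fun hadj => hz (hP' x y h.1 h.2 hadj)
    · rfl

end flows

/-! ### The shares of a cycle and of a bridge -/

section lowerBound

/-- The resistance between the vertices `i` and `j` of a cycle `0, 1, …, k - 1`. -/
noncomputable def cycRes (k i j : ℕ) : ℝ := |(i : ℝ) - j| - ((i : ℝ) - j) ^ 2 / k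

lemma cycRes_comm (k i j : ℕ) : cycRes k i j = cycRes k j i := by
  rw [cycRes, cycRes, abs_sub_comm, ← neg_sub (j : ℝ) i, neg_sq]

lemma cycRes_self (k i : ℕ) : cycRes k i i = 0 := by simp [cycRes]

lemma cycRes_nonneg {k i j : ℕ} (hi : i < k) (hj : j < k) : 0 ≤ cycRes k i j := by
  have hk : (0 : ℝ) < k := by exact_mod_cast (by omega : 0 < k)
  have h1 : |(i : ℝ) - j| ≤ k := by
    have hi' : (i : ℝ) < k := by exact_mod_cast hi
    have hj' : (j : ℝ) < k := by exact_mod_cast hj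
    rw [abs_le]
    constructor <;> linarith [(Nat.cast_nonneg i : (0 : ℝ) ≤ i), (Nat.cast_nonneg j : (0 : ℝ) ≤ j)]
  rw [cycRes, sub_nonneg, div_le_iff₀ hk, ← sq_abs, sq]
  exact mul_le_mul_of_nonneg_left h1 (abs_nonneg _)

lemma sum_sub_range (a : ℝ) (m : ℕ) :
    ∑ j ∈ Finset.range m, (a - j) = m * a - m * (m - 1) / 2 := by
  induction m with
  | zero => simp
  | succ m ih => rw [Finset.sum_range_succ, ih]; push_cast; ring

lemma sum_sub_sq_range (a : ℝ) (m : ℕ) :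
    ∑ j ∈ Finset.range m, (a - j) ^ 2
      = m * a ^ 2 - m * (m - 1) * a + m * (m - 1) * (2 * m - 1) / 6 := by
  induction m with
  | zero => simp
  | succ m ih => rw [Finset.sum_range_succ, ih]; push_cast; ring

lemma sum_cycRes {k i : ℕ} (hi : i < k) :
    ∑ j ∈ Finset.range k, cycRes k i j = ((k : ℝ) ^ 2 - 1) / 6 := by
  have hk : (k : ℝ) ≠ 0 := by exact_mod_cast (by omega : k ≠ 0)
  have habs : ∑ j ∈ Finset.range k, |(i : ℝ) - j|
      = (i * i - i * (i - 1) / 2) - ((k - i : ℕ) * 0 - (k - i : ℕ) * ((k - i : ℕ) - 1) / 2) := by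
    conv_lhs => rw [show k = i + (k - i) by omega]
    rw [Finset.sum_range_add, ← sum_sub_range, ← sum_sub_range, sub_eq_add_neg,
      ← Finset.sum_neg_distrib]
    congr 1
    · refine Finset.sum_congr rfl fun j hj => abs_of_nonneg ?_
      have : (j : ℝ) < i := by exact_mod_cast Finset.mem_range.1 hj
      linarith
    · refine Finset.sum_congr rfl fun j _ => ?_
      push_cast
      rw [abs_of_nonpos] <;> linarith [(Nat.cast_nonneg j : (0 : ℝ) ≤ j)]
  simp only [cycRes]
  rw [Finset.sum_sub_distrib, habs, ← Finset.sum_div, sum_sub_sq_range, Nat.cast_sub hi.le]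
  field_simp
  ring

/-- If the net flow through each of the cuts of a `k`-cycle is the one prescribed by a unit flow
from `a` to `b`, the energy on the cycle is at least the resistance of the cycle: the flow
along the cycle is a prescribed one up to the constant `g`, which is then optimized. -/
lemma cycRes_le_sum {k a b : ℕ} (ha : a < k) (hb : b < k) (φ : ℕ → ℝ) (g : ℝ)
    (h : ∀ i < k - 1, φ i + g = (if a ≤ i then 1 else 0) - (if b ≤ i then 1 else 0)) :
    cycRes k a b ≤ g ^ 2 + ∑ i ∈ Finset.range (k - 1), φ i ^ 2 := by
  obtain ⟨m, rfl⟩ : ∃ m, k = m + 1 := ⟨k - 1, by omega⟩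
  simp only [Nat.add_sub_cancel] at *
  have hcount : ∀ {t : ℕ}, t < m + 1 →
      ∑ i ∈ Finset.range m, (if t ≤ i then (1 : ℝ) else 0) = m - t := by
    intro t ht
    have hIco : Finset.filter (fun i => t ≤ i) (Finset.range m) = Finset.Ico t m := by
      ext i; simp; omega
    rw [Finset.sum_ite, hIco]
    simp [Nat.cast_sub (show t ≤ m by omega)]
  have hsum : ∑ i ∈ Finset.range m,
      ((if a ≤ i then (1 : ℝ) else 0) - (if b ≤ i then 1 else 0)) = b - a := by
    rw [Finset.sum_sub_distrib, hcount ha, hcount hb]; ring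
  have hsq : ∑ i ∈ Finset.range m,
      ((if a ≤ i then (1 : ℝ) else 0) - (if b ≤ i then 1 else 0)) ^ 2 = |(a : ℝ) - b| := by
    rcases le_total a b with hab | hab
    · rw [abs_of_nonpos (by simpa using (Nat.cast_le (α := ℝ)).2 hab), neg_sub, ← hsum]
      refine Finset.sum_congr rfl fun i _ => ?_
      split_ifs <;> first | (exfalso; omega) | norm_num
    · rw [abs_of_nonneg (by simpa using (Nat.cast_le (α := ℝ)).2 hab), ← neg_sub, ← hsum,
        ← Finset.sum_neg_distrib]
      refine Finset.sum_congr rfl fun i _ => ?_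
      split_ifs <;> first | (exfalso; omega) | norm_num
  have hφ : ∑ i ∈ Finset.range m, φ i ^ 2
      = |(a : ℝ) - b| - 2 * g * (b - a) + m * g ^ 2 := by
    rw [← hsq, ← hsum, Finset.mul_sum, ← Finset.sum_sub_distrib]
    have : (m : ℝ) * g ^ 2 = ∑ i ∈ Finset.range m, g ^ 2 := by simp
    rw [this, ← Finset.sum_add_distrib]
    refine Finset.sum_congr rfl fun i hi => ?_
    rw [← h i (Finset.mem_range.1 hi)]
    ring
  rw [hφ, cycRes]
  have hm : (0 : ℝ) < m + 1 := by positivity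
  push_cast
  have : 0 ≤ ((m + 1 : ℝ) * g - (b - a)) ^ 2 / (m + 1) := by positivity
  have h2 : ((m + 1 : ℝ) * g - (b - a)) ^ 2 / (m + 1)
      = (m + 1) * g ^ 2 - 2 * g * (b - a) + ((a : ℝ) - b) ^ 2 / (m + 1) := by
    field_simp
    ring
  linarith

/-- The energy of a unit flow on the edges of the cycle. The cut between the labels at most `i` and
the larger ones consists of the `i`-th edge of the cycle and of its last edge. -/
lemma IsRetraction.cycRes_le [Fintype V] [DecidableEq V] {G : SimpleGraph V} {k : ℕ} {c : ℕ → V}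
    {p : V → ℕ} (h : IsRetraction G k c p) {a b : V} {f : V → V → ℝ} (hf : IsUnitFlow G a b f) :
    cycRes k (p a) (p b) ≤ ∑ z ∈ cyclePairs k c, f z.1 z.2 ^ 2 := by
  have h3 := h.three_le
  rw [h.sum_cyclePairs]
  refine cycRes_le_sum (h.lt a) (h.lt b) _ _ fun i hi => ?_
  have hne : (c i, c (i + 1)) ≠ (c 0, c (k - 1)) := by
    intro heq
    obtain ⟨h1, h2⟩ := Prod.mk.inj heq
    replace h1 := congrArg p h1
    replace h2 := congrArg p h2
    rw [h.apply_c i (by omega), h.apply_c 0 (by omega)] at h1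
    rw [h.apply_c (i + 1) (by omega), h.apply_c (k - 1) (by omega)] at h2
    omega
  rw [← hf.sum_cut (fun v => p v ≤ i) {(c i, c (i + 1)), (c 0, c (k - 1))}, Finset.sum_pair hne]
  · intro z hz
    simp only [Finset.mem_insert, Finset.mem_singleton] at hz
    rcases hz with rfl | rfl
    · dsimp only
      rw [h.apply_c i (by omega), h.apply_c (i + 1) (by omega)]
      omega
    · dsimp only
      rw [h.apply_c 0 (by omega), h.apply_c (k - 1) (by omega)]
      omega
  · intro x y hx hy hadj
    rcases h.eq_of_adj x y hadj (by omega) with ⟨j, hj, rfl, rfl⟩ | ⟨rfl, rfl⟩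
    · rw [h.apply_c _ (by omega)] at hx hy
      simp [show j = i by omega]
    · simp

/-- The share of one cycle in the degree resistance distance. The worst case puts all vertices
outside the cycle, and the whole excess `∑ (d(v) - 2) = 2`, into a single fibre. -/
lemma IsRetraction.le_sum_vdeg_mul_cycRes [Fintype V] {G : SimpleGraph V} {k : ℕ} {c : ℕ → V}
    {p : V → ℕ} (h : IsRetraction G k c p) {n : ℕ} (hn : Fintype.card V = n)
    (hd : ∑ v, vdeg G v = 2 * (n + 1)) :
    ((k : ℝ) ^ 2 - 1) / 3 * (2 * n - k + 1)
      ≤ ∑ u, ∑ v, (vdeg G u : ℝ) * cycRes k (p u) (p v) := by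
  classical
  -- `A i` and `D i` are the size and the degree sum of the `i`-th fibre.
  set A : ℕ → ℝ := fun i => ((#{v | p v = i} : ℕ) : ℝ) with hA
  set D : ℕ → ℝ := fun i => ((∑ v with p v = i, vdeg G v : ℕ) : ℝ) with hD
  set R : ℝ := ((k : ℝ) ^ 2 - 1) / 6 with hR
  have hmaps : ∀ v ∈ (Finset.univ : Finset V), p v ∈ Finset.range k :=
    fun v _ => Finset.mem_range.2 (h.lt v)
  have hA1 : ∀ i ∈ Finset.range k, 1 ≤ A i := by
    intro i hi
    have : 0 < #{v | p v = i} := Finset.card_pos.2 ⟨c i, by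
      simpa using h.apply_c i (Finset.mem_range.1 hi)⟩
    simp only [hA]
    exact_mod_cast this
  have hD1 : ∀ i ∈ Finset.range k, 2 * A i ≤ D i := by
    intro i hi
    simp only [hA, hD]
    exact_mod_cast h.two_mul_card_le (Finset.mem_range.1 hi)
  have hAn : ∑ i ∈ Finset.range k, A i = n := by
    rw [← hn, ← Finset.card_univ, Finset.card_eq_sum_card_fiberwise hmaps]
    push_cast
    rfl
  have hDn : ∑ i ∈ Finset.range k, D i = 2 * (n + 1) := by
    have h1 := Finset.sum_fiberwise_of_maps_to hmaps (vdeg G)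
    rw [hd] at h1
    simp only [hD]
    exact_mod_cast h1
  set W : ℕ → ℝ := fun i => ∑ j ∈ Finset.range k, A j * cycRes k i j with hW
  have hsum : ∑ u, ∑ v, (vdeg G u : ℝ) * cycRes k (p u) (p v)
      = ∑ i ∈ Finset.range k, D i * W i := by
    have h1 : ∀ i, ∑ v, cycRes k i (p v) = W i := by
      intro i
      rw [← Finset.sum_fiberwise_of_maps_to hmaps]
      refine Finset.sum_congr rfl fun j _ => ?_
      rw [Finset.sum_congr rfl (g := fun _ => cycRes k i j), Finset.sum_const, nsmul_eq_mul]
      intro v hv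
      rw [(Finset.mem_filter.1 hv).2]
    simp only [← Finset.mul_sum, h1]
    rw [← Finset.sum_fiberwise_of_maps_to hmaps]
    refine Finset.sum_congr rfl fun i _ => ?_
    simp only [hD]
    push_cast
    rw [Finset.sum_mul]
    refine Finset.sum_congr rfl fun v hv => ?_
    rw [(Finset.mem_filter.1 hv).2]
  have hw0 : ∀ i ∈ Finset.range k, ∀ j ∈ Finset.range k, 0 ≤ cycRes k i j :=
    fun i hi j hj => cycRes_nonneg (Finset.mem_range.1 hi) (Finset.mem_range.1 hj)
  have hrow : ∀ i ∈ Finset.range k, ∑ j ∈ Finset.range k, cycRes k i j = R :=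
    fun i hi => sum_cycRes (Finset.mem_range.1 hi)
  have hWR : ∀ i ∈ Finset.range k, R ≤ W i := by
    intro i hi
    rw [← hrow i hi]
    exact Finset.sum_le_sum fun j hj => le_mul_of_one_le_left (hw0 i hi j hj) (hA1 j hj)
  have h1 : 2 * R ≤ ∑ i ∈ Finset.range k, (D i - 2 * A i) * W i := by
    have : ∑ i ∈ Finset.range k, (D i - 2 * A i) * R = 2 * R := by
      rw [← Finset.sum_mul, Finset.sum_sub_distrib, ← Finset.mul_sum, hAn, hDn]; ring
    rw [← this]
    exact Finset.sum_le_sum fun i hi =>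
      mul_le_mul_of_nonneg_left (hWR i hi) (by linarith [hD1 i hi])
  have h2 : 2 * n * R - k * R ≤ ∑ i ∈ Finset.range k, A i * W i := by
    have hlin : ∑ i ∈ Finset.range k, ∑ j ∈ Finset.range k, (A i + A j - 1) * cycRes k i j
        = 2 * n * R - k * R := by
      have e1 : ∑ i ∈ Finset.range k, ∑ j ∈ Finset.range k, A i * cycRes k i j = n * R := by
        rw [← hAn, Finset.sum_mul]
        exact Finset.sum_congr rfl fun i hi => by rw [← Finset.mul_sum, hrow i hi]
      have e2 : ∑ i ∈ Finset.range k, ∑ j ∈ Finset.range k, A j * cycRes k i j = n * R := by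
        rw [Finset.sum_comm, ← e1]
        exact Finset.sum_congr rfl fun i _ => Finset.sum_congr rfl fun j _ => by
          rw [cycRes_comm]
      have e3 : ∑ i ∈ Finset.range k, ∑ j ∈ Finset.range k, cycRes k i j = k * R := by
        rw [Finset.sum_congr rfl hrow]; simp
      simp only [sub_mul, add_mul, one_mul, Finset.sum_sub_distrib, Finset.sum_add_distrib]
      rw [e1, e2, e3]
      ring
    rw [← hlin]
    refine Finset.sum_le_sum fun i hi => ?_
    rw [hW, Finset.mul_sum]
    refine Finset.sum_le_sum fun j hj => ?_
    rw [← mul_assoc]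
    refine mul_le_mul_of_nonneg_right ?_ (hw0 i hi j hj)
    -- This is `(A i - 1) (A j - 1) ≥ 0`.
    nlinarith [hA1 i hi, hA1 j hj]
  have h3 : ∑ i ∈ Finset.range k, D i * W i
      = ∑ i ∈ Finset.range k, (D i - 2 * A i) * W i + 2 * ∑ i ∈ Finset.range k, A i * W i := by
    rw [Finset.mul_sum, ← Finset.sum_add_distrib]
    exact Finset.sum_congr rfl fun i _ => by ring
  rw [hsum, h3]
  have : ((k : ℝ) ^ 2 - 1) / 3 * (2 * n - k + 1) = 2 * R + 2 * (2 * n * R - k * R) := by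
    rw [hR]; ring
  linarith

open Classical in
/-- The indicator of `u` and `v` lying in different components of `G` minus the edge `e`. -/
noncomputable def sepBy (G : SimpleGraph V) (e : Sym2 V) (u v : V) : ℝ :=
  if (G.deleteEdges {e}).Reachable u v then 0 else 1

lemma sepBy_comm (G : SimpleGraph V) (e : Sym2 V) (u v : V) : sepBy G e u v = sepBy G e v u := by
  by_cases h : (G.deleteEdges {e}).Reachable u v
  · rw [sepBy, sepBy, if_pos h, if_pos h.symm]
  · rw [sepBy, sepBy, if_neg h, if_neg (fun h' => h h'.symm)]

lemma sepBy_self (G : SimpleGraph V) (e : Sym2 V) (u : V) : sepBy G e u u = 0 := by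
  rw [sepBy, if_pos (SimpleGraph.Reachable.refl _)]

/-- Deleting a bridge `xy` leaves the component of `x` and that of `y`. -/
lemma not_reachable_iff_of_isBridge {G : SimpleGraph V} (hconn : G.Connected) {x y : V}
    (hb : G.IsBridge s(x, y)) (v : V) :
    ¬ (G.deleteEdges {s(x, y)}).Reachable v x ↔ (G.deleteEdges {s(x, y)}).Reachable v y := by
  rw [SimpleGraph.isBridge_iff] at hb
  have hor : ∀ (a b : V) (w : G.Walk a b), b = x → (G.deleteEdges {s(x, y)}).Reachable a x ∨
      (G.deleteEdges {s(x, y)}).Reachable a y := by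
    intro a b w
    induction w with
    | nil => rintro rfl; exact Or.inl (SimpleGraph.Reachable.refl _)
    | @cons a b' _ hab w ih =>
      intro hbx
      by_cases he : s(a, b') = s(x, y)
      · rcases Sym2.eq_iff.1 he with ⟨rfl, rfl⟩ | ⟨rfl, rfl⟩
        · exact Or.inl (SimpleGraph.Reachable.refl _)
        · exact Or.inr (SimpleGraph.Reachable.refl _)
      · have hr : (G.deleteEdges {s(x, y)}).Reachable a b' :=
          (SimpleGraph.deleteEdges_adj.2 ⟨hab, he⟩).reachable
        exact (ih hbx).imp hr.trans hr.trans
  obtain ⟨w⟩ := hconn.preconnected v x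
  exact ⟨fun h => (hor v x w rfl).resolve_left h, fun h h' => hb (h'.symm.trans h)⟩

/-- A unit flow carries one unit through a bridge that separates its terminals. -/
lemma sepBy_le_sq [Fintype V] {G : SimpleGraph V} (hconn : G.Connected) {x y : V}
    (hxy : G.Adj x y) (hb : G.IsBridge s(x, y)) {a b : V} {f : V → V → ℝ}
    (hf : IsUnitFlow G a b f) : sepBy G s(x, y) a b ≤ f x y ^ 2 := by
  classical
  have hiff := not_reachable_iff_of_isBridge hconn hb
  have hb' := SimpleGraph.isBridge_iff.1 hb
  have hcut := hf.sum_cut (fun v => (G.deleteEdges {s(x, y)}).Reachable v x) {(x, y)} (by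
    intro z hz
    rw [Finset.mem_singleton] at hz
    subst hz
    exact ⟨SimpleGraph.Reachable.refl _, fun h => hb' h.symm⟩) (by
    intro u v hu hv huv
    rw [Finset.mem_singleton]
    by_cases he : s(u, v) = s(x, y)
    · rcases Sym2.eq_iff.1 he with ⟨rfl, rfl⟩ | ⟨rfl, rfl⟩
      · rfl
      · exact absurd (SimpleGraph.Reachable.refl _) hv
    · have hr : (G.deleteEdges {s(x, y)}).Reachable u v :=
        (SimpleGraph.deleteEdges_adj.2 ⟨huv, he⟩).reachable
      exact absurd (hr.symm.trans hu) hv)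
  rw [Finset.sum_singleton] at hcut
  dsimp only at hcut
  rw [sepBy]
  split_ifs with hab
  · positivity
  · rw [hcut]
    by_cases ha : (G.deleteEdges {s(x, y)}).Reachable a x
    · by_cases hbx : (G.deleteEdges {s(x, y)}).Reachable b x
      · exact absurd (ha.trans hbx.symm) hab
      · simp [ha, hbx]
    · by_cases hbx : (G.deleteEdges {s(x, y)}).Reachable b x
      · simp [ha, hbx]
      · exact absurd (((hiff a).1 ha).trans ((hiff b).1 hbx).symm) hab

/-- The share of one bridge in the degree resistance distance; equality holds exactly for
pendent edges. -/
lemma le_sum_vdeg_mul_sepBy [Fintype V] {G : SimpleGraph V} (hconn : G.Connected) {x y : V}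
    (hxy : G.Adj x y) (hb : G.IsBridge s(x, y)) {n : ℕ} (hn : Fintype.card V = n)
    (hd : ∑ v, vdeg G v = 2 * (n + 1)) :
    3 * (n : ℝ) ≤ ∑ u, ∑ v, (vdeg G u : ℝ) * sepBy G s(x, y) u v := by
  classical
  have hiff := not_reachable_iff_of_isBridge hconn hb
  set H := G.deleteEdges {s(x, y)} with hH
  set S : Finset V := {v | H.Reachable v x} with hS
  have hmS : ∀ v, v ∈ S ↔ H.Reachable v x := by simp [hS]
  have hmSc : ∀ v, v ∈ Sᶜ ↔ H.Reachable v y := by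
    intro v; rw [Finset.mem_compl, hmS, hiff]
  have hle : H ≤ G := G.deleteEdges_le _
  have hx : x ∈ S := (hmS x).2 (SimpleGraph.Reachable.refl _)
  have hy : y ∈ Sᶜ := (hmSc y).2 (SimpleGraph.Reachable.refl _)
  have b1 := two_mul_card_add_le_sum_vdeg hle S x hmS {y} (by
    intro t ht
    rw [Finset.mem_singleton] at ht
    subst ht
    exact ⟨hxy, by simp [hH]⟩)
  have b2 := two_mul_card_add_le_sum_vdeg hle Sᶜ y hmSc {x} (by
    intro t ht
    rw [Finset.mem_singleton] at ht
    subst ht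
    exact ⟨hxy.symm, by simp [hH, Sym2.eq_swap]⟩)
  have hcard : #S + #Sᶜ = n := by rw [Finset.card_add_card_compl, hn]
  have hdeg : ∑ v ∈ S, vdeg G v + ∑ v ∈ Sᶜ, vdeg G v = 2 * (n + 1) := by
    rw [Finset.sum_add_sum_compl, hd]
  have hs1 : 1 ≤ #S := Finset.card_pos.2 ⟨x, hx⟩
  have hs2 : 1 ≤ #Sᶜ := Finset.card_pos.2 ⟨y, hy⟩
  rw [Finset.card_singleton] at b1 b2
  have hrow : ∀ u, ∑ v, sepBy G s(x, y) u v = if u ∈ S then (#Sᶜ : ℝ) else (#S : ℝ) := by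
    intro u
    split_ifs with hu
    · have h1 : ∀ v, sepBy G s(x, y) u v = if v ∈ Sᶜ then 1 else 0 := by
        intro v
        rw [sepBy, ← hH]
        by_cases hv : v ∈ Sᶜ
        · rw [if_pos hv, if_neg]
          intro h
          exact Finset.mem_compl.1 hv ((hmS v).2 (h.symm.trans ((hmS u).1 hu)))
        · rw [if_neg hv, if_pos]
          rw [Finset.mem_compl, not_not] at hv
          exact ((hmS u).1 hu).trans ((hmS v).1 hv).symm
      rw [Finset.sum_congr rfl fun v _ => h1 v, Finset.sum_boole, Finset.filter_mem_eq_inter,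
        Finset.univ_inter]
    · have hu' : u ∈ Sᶜ := Finset.mem_compl.2 hu
      have h1 : ∀ v, sepBy G s(x, y) u v = if v ∈ S then 1 else 0 := by
        intro v
        rw [sepBy, ← hH]
        by_cases hv : v ∈ S
        · rw [if_pos hv, if_neg]
          intro h
          exact hu ((hmS u).2 (h.trans ((hmS v).1 hv)))
        · rw [if_neg hv, if_pos]
          exact ((hmSc u).1 hu').trans ((hmSc v).1 (Finset.mem_compl.2 hv)).symm
      rw [Finset.sum_congr rfl fun v _ => h1 v]
      simp
  simp only [← Finset.mul_sum, hrow]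
  rw [← Finset.sum_add_sum_compl S,
    Finset.sum_congr rfl (g := fun v => (vdeg G v : ℝ) * #Sᶜ) (fun v hv => by rw [if_pos hv]),
    Finset.sum_congr (s₁ := Sᶜ) rfl (g := fun v => (vdeg G v : ℝ) * #S) (fun v hv => by
      rw [if_neg (Finset.mem_compl.1 hv)]), ← Finset.sum_mul, ← Finset.sum_mul,
    ← Nat.cast_sum, ← Nat.cast_sum]
  generalize #S = s at *
  generalize #Sᶜ = t at *
  generalize ∑ v ∈ S, vdeg G v = d₁ at *
  generalize ∑ v ∈ Sᶜ, vdeg G v = d₂ at *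
  -- `d₁ = 2 s - 1 + i` and `d₂ = 2 t - 1 + j` with `i + j = 4`.
  obtain ⟨i, rfl⟩ : ∃ i, s = i + 1 := ⟨s - 1, by omega⟩
  obtain ⟨j, rfl⟩ : ∃ j, t = j + 1 := ⟨t - 1, by omega⟩
  obtain ⟨i', rfl⟩ : ∃ i', d₁ = 2 * i + 1 + i' := ⟨d₁ - (2 * i + 1), by omega⟩
  obtain ⟨j', rfl⟩ : ∃ j', d₂ = 2 * j + 1 + j' := ⟨d₂ - (2 * j + 1), by omega⟩
  have hij : i' + j' = 4 := by omega
  have : 3 * n ≤ (2 * i + 1 + i') * (j + 1) + (2 * j + 1 + j') * (i + 1) := by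
    have e : n = i + j + 2 := by omega
    subst e
    nlinarith [Nat.zero_le (i * j), Nat.zero_le (i' * j), Nat.zero_le (j' * i)]
  exact_mod_cast this

end lowerBound

/-! ### Adding up the shares -/

section splitting

/-- If no edge is stretched by both retractions, a sum over all darts splits into the two cycles
and the remaining darts. -/
lemma sum_adj_eq [Fintype V] [DecidableEq V] {G : SimpleGraph V} [DecidableRel G.Adj]
    {k₁ k₂ : ℕ} {c₁ c₂ : ℕ → V} {p₁ p₂ : V → ℕ} (h₁ : IsRetraction G k₁ c₁ p₁)
    (h₂ : IsRetraction G k₂ c₂ p₂) (hex : ∀ x y, G.Adj x y → p₁ x ≠ p₁ y → p₂ x = p₂ y)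
    (F : V → V → ℝ) (hF : ∀ x y, F x y = F y x) :
    ∑ x, ∑ y, (if G.Adj x y then F x y else 0)
      = 2 * ∑ z ∈ cyclePairs k₁ c₁, F z.1 z.2 + 2 * ∑ z ∈ cyclePairs k₂ c₂, F z.1 z.2
        + ∑ z : V × V with G.Adj z.1 z.2 ∧ p₁ z.1 = p₁ z.2 ∧ p₂ z.1 = p₂ z.2, F z.1 z.2 := by
  have hlt : ∀ {k : ℕ} {c : ℕ → V} {p : V → ℕ}, IsRetraction G k c p →
      ∑ x, ∑ y, (if G.Adj x y ∧ p x < p y then F x y else 0)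
        = ∑ z ∈ cyclePairs k c, F z.1 z.2 := by
    intro k c p h
    rw [← Fintype.sum_prod_type' (f := fun x y => if G.Adj x y ∧ p x < p y then F x y else 0),
      ← Finset.sum_filter]
    refine Finset.sum_congr ?_ fun _ _ => rfl
    ext ⟨x, y⟩
    simp [h.mem_cyclePairs]
  have hgt : ∀ {k : ℕ} {c : ℕ → V} {p : V → ℕ}, IsRetraction G k c p →
      ∑ x, ∑ y, (if G.Adj x y ∧ p y < p x then F x y else 0)
        = ∑ z ∈ cyclePairs k c, F z.1 z.2 := by
    intro k c p h
    rw [← hlt h, Finset.sum_comm]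
    refine Finset.sum_congr rfl fun x _ => Finset.sum_congr rfl fun y _ => ?_
    simp only [hF y x, G.adj_comm y x]
  have hrest : ∑ z : V × V with G.Adj z.1 z.2 ∧ p₁ z.1 = p₁ z.2 ∧ p₂ z.1 = p₂ z.2, F z.1 z.2
      = ∑ x, ∑ y, (if G.Adj x y ∧ p₁ x = p₁ y ∧ p₂ x = p₂ y then F x y else 0) := by
    rw [← Fintype.sum_prod_type'
      (f := fun x y => if G.Adj x y ∧ p₁ x = p₁ y ∧ p₂ x = p₂ y then F x y else 0),
      ← Finset.sum_filter]
  rw [hrest, two_mul, two_mul]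
  conv_rhs => rw [← hlt h₁, ← hlt h₂]
  conv_rhs =>
    enter [1, 1, 2]
    rw [hlt h₁, ← hgt h₁]
  conv_rhs =>
    enter [1, 2, 2]
    rw [hlt h₂, ← hgt h₂]
  simp only [← Finset.sum_add_distrib]
  refine Finset.sum_congr rfl fun x _ => Finset.sum_congr rfl fun y _ => ?_
  by_cases hxy : G.Adj x y
  · have := hex x y hxy
    simp only [hxy, true_and, if_true]
    rcases lt_trichotomy (p₁ x) (p₁ y) with h | h | h
    · have e := this h.ne
      simp [h, h.ne, h.not_gt, e]
    · rcases lt_trichotomy (p₂ x) (p₂ y) with h' | h' | h'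
      · simp [h, h', h'.ne, h'.not_gt]
      · simp [h, h']
      · simp [h, h', h'.ne', h'.not_gt]
    · have e := this h.ne'
      simp [h, h.ne', h.not_gt, e]
  · simp [hxy]

lemma le_DR [Fintype V] {G : SimpleGraph V} {ρ : V → V → ℝ} (hρ : ∀ u v, ρ u v ≤ eRes G u v)
    (hsymm : ∀ u v, ρ u v = ρ v u) : ∑ u, ∑ v, (vdeg G u : ℝ) * ρ u v ≤ DR G := by
  have h1 : ∑ v, ∑ u, ((vdeg G u : ℝ) + vdeg G v) * ρ u v
      = 2 * ∑ u, ∑ v, (vdeg G u : ℝ) * ρ u v := by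
    simp only [add_mul, Finset.sum_add_distrib]
    rw [two_mul, Finset.sum_comm]
    congr 1
    exact Finset.sum_congr rfl fun v _ => Finset.sum_congr rfl fun u _ => by rw [hsymm]
  have h2 : ∑ v, ∑ u, ((vdeg G u : ℝ) + vdeg G v) * ρ u v
      ≤ ∑ v, ∑ u, ((vdeg G u : ℝ) + vdeg G v) * eRes G u v :=
    Finset.sum_le_sum fun v _ => Finset.sum_le_sum fun u _ =>
      mul_le_mul_of_nonneg_left (hρ u v) (by positivity)
  rw [DR]
  linarith

/-- Compared with the share of a triangle, `(16 n - 16) / 3`, the bound for a cycle of length `k` is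
larger by at least `3 n` for each of the `k - 3` further edges, which replace bridges. -/
lemma cycle_share_bound {n k : ℕ} (h3 : 3 ≤ k) (hkn : k + 2 ≤ n) :
    (16 * (n : ℝ) - 16) / 3 + 3 * n * (k - 3) ≤ ((k : ℝ) ^ 2 - 1) / 3 * (2 * n - k + 1) := by
  have h3' : (3 : ℝ) ≤ k := by exact_mod_cast h3
  have hkn' : (k : ℝ) + 2 ≤ n := by exact_mod_cast hkn
  have hid : ((k : ℝ) ^ 2 - 1) / 3 * (2 * n - k + 1)
      - ((16 * (n : ℝ) - 16) / 3 + 3 * n * (k - 3))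
      = (k - 3) * (n * (2 * k - 3) - k ^ 2 - 2 * k - 5) / 3 := by ring
  rcases h3.eq_or_lt with rfl | h4
  · norm_num at hid ⊢
    linarith
  · have h4' : (4 : ℝ) ≤ k := by exact_mod_cast h4
    have hb : 0 ≤ (n : ℝ) * (2 * k - 3) - k ^ 2 - 2 * k - 5 := by nlinarith
    have : 0 ≤ ((k : ℝ) - 3) * (n * (2 * k - 3) - k ^ 2 - 2 * k - 5) / 3 :=
      div_nonneg (mul_nonneg (by linarith) hb) (by norm_num)
    linarith

/-- The resistances dominate the sum of the contributions of the two cycles and of the bridges,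
and each contribution is bounded separately. -/
theorem le_DR_of_two_cycles {n : ℕ} {G : SimpleGraph (Fin n)} (hconn : G.Connected)
    (hcard : Nat.card G.edgeSet = n + 1) (h2 : {s : Set (Fin n) | IsCycleSet G s}.ncard = 2) :
    3 * (n : ℝ) ^ 2 - 13 / 3 * n - 32 / 3 ≤ DR G := by
  classical
  obtain ⟨v₁, v₂, w₁, w₂, hw₁, hw₂, hdisj, hall⟩ := exists_two_cycles hconn hcard h2
  obtain ⟨p₁, h₁, hp₁⟩ := exists_isRetraction hconn w₁ hw₁ (by
    intro v d hd e he hed e' he'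
    rcases hall v d hd with h | h
    · exact (h e').2 he'
    · exact absurd ((h e).1 hed) (hdisj e he))
  obtain ⟨p₂, h₂, hp₂⟩ := exists_isRetraction hconn w₂ hw₂ (by
    intro v d hd e he hed e' he'
    rcases hall v d hd with h | h
    · exact absurd he (hdisj e ((h e).1 hed))
    · exact (h e').2 he')
  set k₁ := w₁.length
  set k₂ := w₂.length
  set c₁ := w₁.getVert
  set c₂ := w₂.getVert
  have hex : ∀ x y, G.Adj x y → p₁ x ≠ p₁ y → p₂ x = p₂ y := by
    intro x y hxy hne
    by_contra hne'
    exact hdisj _ ((hp₁ x y hxy).2 hne) ((hp₂ x y hxy).2 hne')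
  set B : Finset (Fin n × Fin n) :=
    {z | G.Adj z.1 z.2 ∧ p₁ z.1 = p₁ z.2 ∧ p₂ z.1 = p₂ z.2} with hB
  have hmB : ∀ z ∈ B, G.Adj z.1 z.2 ∧ G.IsBridge s(z.1, z.2) := by
    intro z hz
    obtain ⟨hadj, e₁, e₂⟩ := (Finset.mem_filter.1 hz).2
    refine ⟨hadj, ?_⟩
    rw [SimpleGraph.isBridge_iff_forall_cycle_notMem]
    · intro u d hd hmem
      rcases hall u d hd with h | h
      · exact (hp₁ _ _ hadj).1 ((h _).1 hmem) e₁
      · exact (hp₂ _ _ hadj).1 ((h _).1 hmem) e₂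
    · exact hadj
  have hdeg : ∑ v, vdeg G v = 2 * (n + 1) := by rw [sum_vdeg, hcard]
  have hV : Fintype.card (Fin n) = n := Fintype.card_fin n
  have hcount : 2 * ((n : ℝ) + 1) = 2 * k₁ + 2 * k₂ + #B := by
    have h := sum_adj_eq h₁ h₂ hex (fun _ _ => 1) (fun _ _ => rfl)
    rw [Finset.sum_const, Finset.sum_const, Finset.sum_const, h₁.card_cyclePairs,
      h₂.card_cyclePairs] at h
    simp only [nsmul_eq_mul, mul_one, Finset.sum_boole, ← vdeg_eq_card] at h
    rw [← Nat.cast_sum, hdeg] at h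
    push_cast at h
    exact h
  set ρ : Fin n → Fin n → ℝ := fun u v => cycRes k₁ (p₁ u) (p₁ v) + cycRes k₂ (p₂ u) (p₂ v)
    + 1 / 2 * ∑ z ∈ B, sepBy G s(z.1, z.2) u v with hρ
  have hρle : ∀ u v, ρ u v ≤ eRes G u v := by
    intro u v
    by_cases huv : u = v
    · subst huv
      simp [hρ, cycRes_self, sepBy_self, eRes_self]
    · refine le_eRes huv (hconn.preconnected u v) fun f hf => ?_
      have hE := sum_adj_eq h₁ h₂ hex (fun x y => f x y ^ 2)
        (fun x y => by rw [hf.antisymm x y, neg_sq])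
      have hE' : ∑ x, ∑ y, f x y ^ 2 = ∑ x, ∑ y, (if G.Adj x y then f x y ^ 2 else 0) := by
        refine Finset.sum_congr rfl fun x _ => Finset.sum_congr rfl fun y _ => ?_
        split_ifs with h
        · rfl
        · rw [hf.supp x y h]; norm_num
      have hBle : ∑ z ∈ B, sepBy G s(z.1, z.2) u v ≤ ∑ z ∈ B, f z.1 z.2 ^ 2 :=
        Finset.sum_le_sum fun z hz => sepBy_le_sq hconn (hmB z hz).1 (hmB z hz).2 hf
      rw [hE', hE]
      have := h₁.cycRes_le hf
      have := h₂.cycRes_le hf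
      simp only [hρ]
      linarith
  have hρsymm : ∀ u v, ρ u v = ρ v u := by
    intro u v
    simp only [hρ]
    rw [cycRes_comm k₁, cycRes_comm k₂]
    simp only [sepBy_comm G _ u v]
  have hmain := le_DR hρle hρsymm
  have hexp : ∑ u, ∑ v, (vdeg G u : ℝ) * ρ u v
      = ∑ u, ∑ v, (vdeg G u : ℝ) * cycRes k₁ (p₁ u) (p₁ v)
        + ∑ u, ∑ v, (vdeg G u : ℝ) * cycRes k₂ (p₂ u) (p₂ v)
        + 1 / 2 * ∑ z ∈ B, ∑ u, ∑ v, (vdeg G u : ℝ) * sepBy G s(z.1, z.2) u v := by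
    rw [Finset.sum_comm (s := B), Finset.mul_sum, ← Finset.sum_add_distrib,
      ← Finset.sum_add_distrib]
    refine Finset.sum_congr rfl fun u _ => ?_
    rw [Finset.sum_comm (s := B), Finset.mul_sum, ← Finset.sum_add_distrib,
      ← Finset.sum_add_distrib]
    refine Finset.sum_congr rfl fun v _ => ?_
    rw [← Finset.mul_sum]
    simp only [hρ]
    ring
  have hb : #B * (3 * (n : ℝ)) ≤ ∑ z ∈ B, ∑ u, ∑ v, (vdeg G u : ℝ) * sepBy G s(z.1, z.2) u v := by
    rw [← nsmul_eq_mul]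
    exact Finset.card_nsmul_le_sum _ _ _ fun z hz =>
      le_sum_vdeg_mul_sepBy hconn (hmB z hz).1 (hmB z hz).2 hV hdeg
  have hk : 2 * (n + 1) = 2 * k₁ + 2 * k₂ + #B := by exact_mod_cast hcount
  have h31 := h₁.three_le
  have h32 := h₂.three_le
  have t₁ := (cycle_share_bound h31 (by omega)).trans (h₁.le_sum_vdeg_mul_cycRes hV hdeg)
  have t₂ := (cycle_share_bound h32 (by omega)).trans (h₂.le_sum_vdeg_mul_cycRes hV hdeg)
  have hBn : (#B : ℝ) * (3 * n) = (2 * ((n : ℝ) + 1) - 2 * k₁ - 2 * k₂) * (3 * n) := by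
    rw [hcount]; ring
  rw [hexp] at hmain
  rw [hBn] at hb
  nlinarith

end splitting

/-! ### Resistances from potentials -/

section potentials

/-- By Ohm's law, a potential whose gradient is a unit flow from `a` to `b` computes the
resistance: all unit flows have the same scalar product with the gradient. -/
lemma eRes_eq_of_potential [Fintype V] {G : SimpleGraph V} [DecidableRel G.Adj] {a b : V}
    (hab : a ≠ b) (φ : V → ℝ) (h : ∀ S : V → ℝ,
      ∑ v, S v * ∑ u, (if G.Adj v u then φ v - φ u else 0) = S a - S b) :
    eRes G a b = φ a - φ b := by
  set g : V → V → ℝ := fun x y => if G.Adj x y then φ x - φ y else 0 with hgdef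
  have hg : IsUnitFlow G a b g := by
    refine ⟨fun u v => ?_, fun u v huv => if_neg huv, h⟩
    simp only [hgdef, G.adj_comm v u]
    split_ifs <;> ring
  have hprod : ∀ f, IsUnitFlow G a b f → ∑ u, ∑ v, f u v * g u v = 2 * (φ a - φ b) := by
    intro f hf
    have h1 : ∑ u, ∑ v, f u v * g u v = ∑ u, ∑ v, f u v * φ u - ∑ u, ∑ v, f u v * φ v := by
      simp only [← Finset.sum_sub_distrib]
      refine Finset.sum_congr rfl fun u _ => Finset.sum_congr rfl fun v _ => ?_
      simp only [hgdef]
      split_ifs with huv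
      · ring
      · rw [hf.supp u v huv]; ring
    have h2 : ∑ u, ∑ v, f u v * φ u = φ a - φ b := by
      rw [← hf.div φ]
      refine Finset.sum_congr rfl fun u _ => ?_
      rw [← Finset.sum_mul, mul_comm]
    have h3 : ∑ u, ∑ v, f u v * φ v = -(φ a - φ b) := by
      rw [← h2, Finset.sum_comm, ← Finset.sum_neg_distrib]
      refine Finset.sum_congr rfl fun u _ => ?_
      rw [← Finset.sum_neg_distrib]
      refine Finset.sum_congr rfl fun v _ => ?_
      rw [hf.antisymm v u]
      ring
    rw [h1, h2, h3]
    ring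
  have hgg : ∑ u, ∑ v, g u v ^ 2 = 2 * (φ a - φ b) := by
    rw [← hprod g hg]
    simp only [sq]
  refine le_antisymm ((eRes_le hab hg).trans (by rw [hgg]; linarith)) ?_
  have hreach : G.Reachable a b := by
    by_contra hr
    classical
    -- The flow `g` would carry nothing out of the component of `a`.
    have := hg.sum_cut (fun v => G.Reachable a v) ∅ (by simp)
      (fun x y hx hy hxy => absurd (hx.trans hxy.reachable) hy)
    simp [hr] at this
  refine le_eRes hab hreach fun f hf => ?_
  have h1 : 0 ≤ ∑ u, ∑ v, (f u v - g u v) ^ 2 := by positivity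
  have h2 : ∑ u, ∑ v, (f u v - g u v) ^ 2
      = ∑ u, ∑ v, f u v ^ 2 - 2 * ∑ u, ∑ v, f u v * g u v + ∑ u, ∑ v, g u v ^ 2 := by
    simp only [Finset.mul_sum, ← Finset.sum_sub_distrib, ← Finset.sum_add_distrib]
    refine Finset.sum_congr rfl fun u _ => Finset.sum_congr rfl fun v _ => ?_
    ring
  rw [hprod f hf, hgg] at h2
  linarith

end potentials

/-! ### The extremal graph -/

section extremal

lemma S33_adj {n : ℕ} (a b : Fin n) : (S33 n).Adj a b ↔ a.val ≠ b.val ∧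
    (a.val = 0 ∨ b.val = 0 ∨ (a.val = 1 ∧ b.val = 2) ∨ (a.val = 2 ∧ b.val = 1) ∨
      (a.val = 3 ∧ b.val = 4) ∨ (a.val = 4 ∧ b.val = 3)) := by
  rw [S33, SimpleGraph.fromRel_adj, Ne, Fin.ext_iff]
  tauto

/-- The entry `(a, x)` of the inverse of the Laplacian of `S33 n` grounded at the vertex `0`: it is
block diagonal, with a block for each triangle and for each pendent edge. -/
noncomputable def green (a x : ℕ) : ℝ :=
  if a = 0 ∨ x = 0 then 0
  else if a = x then (if a < 5 then 2 / 3 else 1)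
  else if (a = 1 ∧ x = 2) ∨ (a = 2 ∧ x = 1) ∨ (a = 3 ∧ x = 4) ∨ (a = 4 ∧ x = 3) then 1 / 3
  else 0

lemma green_comm (a x : ℕ) : green a x = green x a := by
  unfold green
  split_ifs <;> first | rfl | (exfalso; omega)

lemma sum_range_add_five (F : ℕ → ℝ) (m : ℕ) : ∑ i ∈ Finset.range (m + 5), F i
    = ∑ i ∈ Finset.range m, F (i + 5) + F 4 + F 3 + F 2 + F 1 + F 0 := by
  simp only [Finset.sum_range_succ']

lemma nat_cases_five (v : ℕ) : v = 0 ∨ v = 1 ∨ v = 2 ∨ v = 3 ∨ v = 4 ∨ ∃ i, v = i + 5 := by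
  by_cases h : v < 5
  · omega
  · exact Or.inr (Or.inr (Or.inr (Or.inr (Or.inr ⟨v - 5, by omega⟩))))

lemma add_five_ne (i : ℕ) : i + 5 ≠ 1 ∧ i + 5 ≠ 2 ∧ i + 5 ≠ 3 ∧ i + 5 ≠ 4 := by omega

lemma sum_green {m v : ℕ} (hv : v < m + 5) :
    ∑ u ∈ Finset.range (m + 5), green v u = if v = 0 then 0 else 1 := by
  rw [sum_range_add_five]
  rcases nat_cases_five v with rfl | rfl | rfl | rfl | rfl | ⟨i, rfl⟩
  case inr.inr.inr.inr.inr =>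
    have hi : i < m := by omega
    simp [green, hi]
  all_goals norm_num [green, add_five_ne]

open Classical in
lemma sum_adj_S33 {m : ℕ} (v : Fin (m + 5)) (F : ℕ → ℝ) :
    ∑ u : Fin (m + 5), (if (S33 (m + 5)).Adj v u then F u else 0)
      = ∑ u ∈ Finset.range (m + 5), (if v.val ≠ u ∧ (v.val = 0 ∨ u = 0 ∨ (v.val = 1 ∧ u = 2) ∨
          (v.val = 2 ∧ u = 1) ∨ (v.val = 3 ∧ u = 4) ∨ (v.val = 4 ∧ u = 3)) then F u else 0) := by
  rw [← Fin.sum_univ_eq_sum_range (fun u => if v.val ≠ u ∧ (v.val = 0 ∨ u = 0 ∨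
    (v.val = 1 ∧ u = 2) ∨ (v.val = 2 ∧ u = 1) ∨ (v.val = 3 ∧ u = 4) ∨ (v.val = 4 ∧ u = 3))
    then F u else 0)]
  exact Finset.sum_congr rfl fun u _ => if_congr (S33_adj v u) rfl rfl

lemma vdeg_S33 {m : ℕ} (v : Fin (m + 5)) : (vdeg (S33 (m + 5)) v : ℝ)
    = if v.val = 0 then (m : ℝ) + 4 else if v.val < 5 then 2 else 1 := by
  classical
  rw [vdeg_eq_card, ← Finset.sum_boole]
  have h := sum_adj_S33 v fun _ => 1
  rw [sum_range_add_five] at h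
  refine Eq.trans (Finset.sum_congr rfl fun u _ => by congr) (h.trans ?_)
  rcases nat_cases_five v.val with h | h | h | h | h | ⟨i, h⟩ <;> rw [h] <;> norm_num [add_five_ne]
  ring

open Classical in
/-- The rows of `green` are grounded potentials of unit flows to the vertex `0`. -/
lemma laplacian_green {m : ℕ} (a v : Fin (m + 5)) :
    ∑ u : Fin (m + 5), (if (S33 (m + 5)).Adj v u then green a v - green a u else 0)
      = (if v = a then 1 else 0) - (if v = 0 then 1 else 0) := by
  by_cases ha : a = 0
  · subst ha
    simp [green]
  have ha' : a.val ≠ 0 := fun h => ha (Fin.ext h)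
  have hne : ∀ v : Fin (m + 5), v ≠ 0 →
      ∑ u : Fin (m + 5), (if (S33 (m + 5)).Adj v u then green a v - green a u else 0)
        = if v = a then 1 else 0 := by
    intro v hv
    have hv' : v.val ≠ 0 := fun h => hv (Fin.ext h)
    rw [sum_adj_S33 v fun u => green a v - green a u, sum_range_add_five]
    simp only [Fin.ext_iff]
    generalize v.val = x at *
    generalize a.val = y at *
    rcases nat_cases_five x with rfl | rfl | rfl | rfl | rfl | ⟨i, rfl⟩ <;>
    rcases nat_cases_five y with rfl | rfl | rfl | rfl | rfl | ⟨j, rfl⟩ <;>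
    first
      | exact absurd rfl hv'
      | exact absurd rfl ha'
      | (norm_num [green, add_five_ne]; done)
      | (norm_num [green, add_five_ne]; simp only [eq_comm])
  by_cases hv : v = 0
  · -- The rows of the Laplacian add up to zero.
    have hz : ∑ v : Fin (m + 5), ∑ u : Fin (m + 5),
        (if (S33 (m + 5)).Adj v u then green a v - green a u else 0) = 0 := by
      apply sum_sum_eq_zero_of_antisymm
      intro u v
      simp only [(S33 (m + 5)).adj_comm v u]
      split_ifs <;> ring
    rw [← Finset.add_sum_erase _ _ (Finset.mem_univ 0),
      Finset.sum_congr rfl (fun v hv => hne v (Finset.ne_of_mem_erase hv)), Finset.sum_ite_eq',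
      if_pos (Finset.mem_erase.2 ⟨ha, Finset.mem_univ _⟩)] at hz
    subst hv
    rw [if_neg (Ne.symm ha), if_pos rfl]
    linarith
  · rw [hne v hv, if_neg hv, sub_zero]

lemma eRes_S33 {m : ℕ} (a b : Fin (m + 5)) :
    eRes (S33 (m + 5)) a b = green a a + green b b - 2 * green a b := by
  classical
  by_cases hab : a = b
  · subst hab
    rw [eRes_self]; ring
  rw [eRes_eq_of_potential hab (fun x => green a x - green b x), green_comm b a]
  · ring
  · intro S
    have h : ∀ v : Fin (m + 5), ∑ u : Fin (m + 5), (if (S33 (m + 5)).Adj v u then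
        (green a v - green b v) - (green a u - green b u) else 0)
        = (if v = a then 1 else 0) - (if v = b then 1 else 0) := by
      intro v
      have h1 := laplacian_green a v
      have h2 := laplacian_green b v
      rw [← sub_sub_sub_cancel_right (if v = a then (1 : ℝ) else 0) _ (if v = 0 then 1 else 0),
        ← h1, ← h2, ← Finset.sum_sub_distrib]
      refine Finset.sum_congr rfl fun u _ => ?_
      split_ifs <;> ring
    simp only [h]
    simp [mul_sub]

/-- The sum is expanded using that the rows of `green` other than the zeroth sum to `1`. -/
theorem DR_S33 (m : ℕ) : DR (S33 (m + 5))
    = 3 * ((m + 5 : ℕ) : ℝ) ^ 2 - 13 / 3 * ((m + 5 : ℕ) : ℝ) - 32 / 3 := by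
  set N := m + 5 with hN
  set d : ℕ → ℝ := fun i => if i = 0 then (m : ℝ) + 4 else if i < 5 then 2 else 1 with hd
  set A := ∑ u ∈ Finset.range N, d u * green u u with hA
  set B := ∑ u ∈ Finset.range N, green u u with hB
  set C := ∑ u ∈ Finset.range N, d u with hC
  set E := ∑ u ∈ Finset.range N, d u * (if u = 0 then 0 else 1) with hE
  have hAv : A = m + 16 / 3 := by
    rw [hA, hN, sum_range_add_five]; norm_num [hd, green]; ring
  have hBv : B = m + 8 / 3 := by
    rw [hB, hN, sum_range_add_five]; norm_num [green]; ring
  have hCv : C = 2 * m + 12 := by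
    rw [hC, hN, sum_range_add_five]; norm_num [hd]; ring
  have hEv : E = m + 8 := by
    rw [hE, hN, sum_range_add_five]; norm_num [hd]; ring
  have hone : ∑ u ∈ Finset.range N, ∑ v ∈ Finset.range N,
      d u * (green u u + green v v - 2 * green u v) = N * A + C * B - 2 * E := by
    have h : ∀ u ∈ Finset.range N, ∑ v ∈ Finset.range N,
        d u * (green u u + green v v - 2 * green u v)
        = N * (d u * green u u) + d u * B - 2 * (d u * (if u = 0 then 0 else 1)) := by
      intro u hu
      rw [← sum_green (Finset.mem_range.1 hu), ← Finset.mul_sum, Finset.sum_sub_distrib,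
        Finset.sum_add_distrib, ← Finset.mul_sum, Finset.sum_const, Finset.card_range,
        nsmul_eq_mul]
      ring
    rw [Finset.sum_congr rfl h, Finset.sum_sub_distrib, Finset.sum_add_distrib, ← Finset.mul_sum,
      ← Finset.sum_mul, ← Finset.mul_sum]
  have hDR : DR (S33 N) = ∑ u ∈ Finset.range N, ∑ v ∈ Finset.range N,
      d u * (green u u + green v v - 2 * green u v) := by
    have hdeg : ∀ v : Fin N, (vdeg (S33 N) v : ℝ) = d v := fun v => vdeg_S33 v
    have hres : ∀ u v : Fin N, eRes (S33 N) u v = green u u + green v v - 2 * green u v :=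
      fun u v => eRes_S33 u v
    rw [DR]
    simp only [hdeg, hres, add_mul, Finset.sum_add_distrib]
    rw [Finset.sum_comm]
    have hsw : ∑ v : Fin N, ∑ u : Fin N, d v * (green u u + green v v - 2 * green u v)
        = ∑ u : Fin N, ∑ v : Fin N, d u * (green u u + green v v - 2 * green u v) := by
      refine Finset.sum_congr rfl fun v _ => Finset.sum_congr rfl fun u _ => ?_
      rw [green_comm u v]
      ring
    rw [hsw, ← Fin.sum_univ_eq_sum_range (fun u => ∑ v ∈ Finset.range N,
      d u * (green u u + green v v - 2 * green u v))]
    simp only [← Fin.sum_univ_eq_sum_range (fun v => d _ * (green _ _ + green v v - 2 * green _ v))]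
    ring
  rw [hDR, hone, hAv, hBv, hCv, hEv, hN]
  push_cast
  ring

end extremal

end structural

/-- Among all `n`-vertex bicyclic graphs with exactly two cycles (`n ≥ 5`),
`S_n^{3,3}` attains the minimum degree resistance distance, and
`D_R(S_n^{3,3}) = 3n² - (13/3)n - 32/3`. -/
theorem S33_minimal (n : ℕ) (hn : 5 ≤ n) :
    DR (S33 n) = 3*(n : ℝ)^2 - (13/3)*(n : ℝ) - 32/3 ∧
    ∀ G : SimpleGraph (Fin n), G.Connected → Nat.card G.edgeSet = n + 1 →
      {s : Set (Fin n) | IsCycleSet G s}.ncard = 2 →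
      DR (S33 n) ≤ DR G := by
  have hval : DR (S33 n) = 3*(n : ℝ)^2 - (13/3)*(n : ℝ) - 32/3 := by
    obtain ⟨m, rfl⟩ : ∃ m, n = m + 5 := ⟨n - 5, by omega⟩
    exact DR_S33 m
  refine ⟨hval, fun G hconn hcard h2 => ?_⟩
  rw [hval]
  exact le_DR_of_two_cycles hconn hcard h2
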